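/- arXiv:math/0406127 — 2 statements merged into one kernel-verified Lean document; each statement's English description precedes it below -/
import Mathlib

section
/- Let n = (n₁,...,n_d) ∈ ℤ^d with n_j ≥ 1, let G = ℤ/n₁ × ... × ℤ/n_d, and let A ⊆ {0,...,n₁−1} × ... × {0,...,n_d−1} ⊆ ℤ^d be a set which is not spectral as a subset of G. Define T(n,k) = {0, n₁, 2n₁, ..., (k−1)n₁} × ... × {0, n_d, ..., (k−1)n_d} and A(k) = A + T(n,k) ⊆ ℤ^d. Then for all sufficiently large k, the set A(k) is not a spectral set in ℤ^d. -/
open scoped BigOperators Pointwise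
open Complex Real

/-- A finite set `B ⊆ ℤ^d` is spectral in `ℤ^d` if there is a set `S` of frequencies
(in `ℝ^d`, thought of mod 1, i.e. in `𝕋^d`) with `#S = #B` and `χ̂_B(s - s') = 0` for
all distinct `s, s' ∈ S`. -/
def SpectralZd {d : ℕ} (B : Finset (Fin d → ℤ)) : Prop :=
  ∃ S : Finset (Fin d → ℝ), S.card = B.card ∧
    ∀ s ∈ S, ∀ s' ∈ S, s ≠ s' →
      ∑ b ∈ B, Complex.exp (2 * π * Complex.I * (∑ j, (s j - s' j) * (b j : ℝ) : ℝ)) = 0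

/-- `e(t) = exp(2 π i t)`. -/
noncomputable def ee (t : ℝ) : ℂ := Complex.exp (2 * π * Complex.I * (t : ℝ))

lemma ee_add (s t : ℝ) : ee (s + t) = ee s * ee t := by
  unfold ee
  rw [← Complex.exp_add]
  congr 1
  push_cast
  ring

lemma ee_zero : ee 0 = 1 := by simp [ee]

lemma ee_sum {ι : Type*} (s : Finset ι) (f : ι → ℝ) : ee (∑ i ∈ s, f i) = ∏ i ∈ s, ee (f i) := by
  unfold ee
  rw [← Complex.exp_sum]
  congr 1
  push_cast
  rw [Finset.mul_sum]

lemma ee_nsmul (t : ℝ) (c : ℕ) : ee (t * c) = ee t ^ c := by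
  unfold ee
  rw [← Complex.exp_nat_mul]
  congr 1
  push_cast
  ring

lemma ee_eq_one (t : ℝ) : ee t = 1 ↔ ∃ m : ℤ, t = m := by
  unfold ee
  rw [Complex.exp_eq_one_iff]
  have h : (2 * π * Complex.I : ℂ) ≠ 0 := Complex.two_pi_I_ne_zero
  constructor
  · rintro ⟨m, hm⟩
    refine ⟨m, ?_⟩
    have : (t : ℂ) = (m : ℂ) := by
      apply mul_left_cancel₀ h
      rw [hm]; ring
    exact_mod_cast this
  · rintro ⟨m, rfl⟩
    refine ⟨m, ?_⟩
    push_cast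
    ring

lemma ee_norm (t : ℝ) : ‖ee t‖ = 1 := by
  have : ee t = Complex.exp (((2 * π * t : ℝ) : ℂ) * Complex.I) := by
    unfold ee; congr 1; push_cast; ring
  rw [this, Complex.norm_exp_ofReal_mul_I]

lemma ee_sub_one (t : ℝ) : ‖ee t - 1‖ ≤ 2 * π * |t| := by
  have h : ee t = Complex.exp (Complex.I * ((2 * π * t : ℝ) : ℂ)) := by
    unfold ee; congr 1; push_cast; ring
  rw [h]
  refine (Real.norm_exp_I_mul_ofReal_sub_one_le).trans ?_
  rw [Real.norm_eq_abs, abs_mul, abs_of_pos Real.two_pi_pos]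

/-- The geometric sum does not vanish near integers. -/
lemma geom_ne (k : ℕ) (hk : 0 < k) (m : ℤ) (r : ℝ) (hr : |r| < 1 / k) :
    ∑ c : Fin k, ee (((m : ℝ) + r) * (c : ℕ)) ≠ 0 := by
  intro h0
  simp_rw [ee_nsmul] at h0
  rw [Fin.sum_univ_eq_sum_range (fun c => ee ((m : ℝ) + r) ^ c)] at h0
  have hm : ee (m : ℝ) = 1 := (ee_eq_one _).2 ⟨m, rfl⟩
  rw [ee_add, hm, one_mul] at h0
  have h1 := geom_sum_mul (ee r) k
  rw [h0, zero_mul] at h1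
  have h2 : ee (r * k) = 1 := by
    rw [ee_nsmul]; exact (sub_eq_zero.1 h1.symm)
  obtain ⟨p, hp⟩ := (ee_eq_one _).1 h2
  have hk' : (0 : ℝ) < k := by exact_mod_cast hk
  have h3 : |(p : ℝ)| < 1 := by
    rw [← hp, abs_mul, abs_of_pos hk']
    rwa [lt_div_iff₀ hk'] at hr
  have h4 : p = 0 := by
    have : |p| < 1 := by exact_mod_cast h3
    exact Int.abs_lt_one_iff.1 this
  have h5 : r = 0 := by
    rw [h4] at hp
    simp at hp
    rcases hp with h | h
    · exact h
    · omega
  rw [h5, ee_zero] at h0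
  simp at h0
  omega

/-- The character of `∏ ZMod (n j)` attached to `u`. -/
noncomputable def psi {d : ℕ} (n : Fin d → ℕ) [∀ j, NeZero (n j)] (u : ∀ j, ZMod (n j)) :
    AddChar (∀ j, ZMod (n j)) ℂ where
  toFun x := ∏ j, ZMod.stdAddChar (u j * x j)
  map_zero_eq_one' := by simp
  map_add_eq_mul' x y := by
    simp [mul_add, AddChar.map_add_eq_mul, Finset.prod_mul_distrib]

lemma psi_apply {d : ℕ} (n : Fin d → ℕ) [∀ j, NeZero (n j)] (u x : ∀ j, ZMod (n j)) :
    psi n u x = ∏ j, ZMod.stdAddChar (u j * x j) := rfl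

lemma psi_sub {d : ℕ} (n : Fin d → ℕ) [∀ j, NeZero (n j)] (u v : ∀ j, ZMod (n j)) :
    psi n u * (psi n v)⁻¹ = psi n (u - v) := by
  rw [mul_inv_eq_iff_eq_mul]
  ext x
  rw [AddChar.mul_apply, psi_apply, psi_apply, psi_apply, ← Finset.prod_mul_distrib]
  refine Finset.prod_congr rfl fun j _ => ?_
  rw [← AddChar.map_add_eq_mul]
  congr 1
  simp only [Pi.sub_apply]
  ring

lemma psi_int {d : ℕ} (n : Fin d → ℕ) [∀ j, NeZero (n j)] (m a : Fin d → ℤ) :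
    psi n (fun j => (m j : ZMod (n j))) (fun j => (a j : ZMod (n j)))
      = ee (∑ j, (m j : ℝ) / n j * a j) := by
  rw [psi_apply, ee_sum]
  refine Finset.prod_congr rfl fun j _ => ?_
  rw [← Int.cast_mul, ZMod.stdAddChar_coe]
  unfold ee
  congr 1
  push_cast
  ring

lemma box_inj {d : ℕ} (n : Fin d → ℕ) (hn : ∀ j, 1 ≤ n j)
    (A : Finset (Fin d → ℤ)) (hbox : ∀ a ∈ A, ∀ j, 0 ≤ a j ∧ a j < n j) (k : ℕ) :
    Set.InjOn (fun p : (Fin d → ℤ) × (Fin d → Fin k) =>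
      p.1 + fun j => ((p.2 j : ℕ) : ℤ) * (n j : ℤ))
      (A ×ˢ (Finset.univ : Finset (Fin d → Fin k)) : Finset _) := by
  rintro ⟨a, c⟩ ha ⟨a', c'⟩ ha' h
  simp only [Finset.coe_product, Set.mem_prod, Finset.mem_coe] at ha ha'
  have key : ∀ j, a j = a' j ∧ c j = c' j := by
    intro j
    have hj := congrFun h j
    simp only [Pi.add_apply] at hj
    obtain ⟨h1, h2⟩ := hbox a ha.1 j
    obtain ⟨h3, h4⟩ := hbox a' ha'.1 j
    have e1 : a j = a' j := by
      have := congrArg (· % (n j : ℤ)) hj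
      simp only [Int.add_mul_emod_self_right] at this
      rwa [Int.emod_eq_of_lt h1 h2, Int.emod_eq_of_lt h3 h4] at this
    refine ⟨e1, ?_⟩
    rw [e1] at hj
    have hnj : (n j : ℤ) ≠ 0 := by have := hn j; omega
    have := mul_right_cancel₀ hnj (add_left_cancel hj)
    exact Fin.ext (by exact_mod_cast this)
  ext1
  · exact funext fun j => (key j).1
  · exact funext fun j => (key j).2

lemma box_eq {d : ℕ} (n : Fin d → ℕ) (A : Finset (Fin d → ℤ)) (k : ℕ) :
    (A + (Finset.univ : Finset (Fin d → Fin k)).image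
          (fun c : Fin d → Fin k => fun j => (c j : ℤ) * (n j : ℤ)))
    = (A ×ˢ (Finset.univ : Finset (Fin d → Fin k))).image
      (fun p : (Fin d → ℤ) × (Fin d → Fin k) =>
      p.1 + fun j => ((p.2 j : ℕ) : ℤ) * (n j : ℤ)) := by
  ext x
  simp only [Finset.mem_add, Finset.mem_image, Finset.mem_product, Finset.mem_univ, true_and,
    and_true, Prod.exists]
  constructor
  · rintro ⟨a, ha, _, ⟨c, rfl⟩, rfl⟩
    exact ⟨a, c, ha, rfl⟩
  · rintro ⟨a, c, ha, rfl⟩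
    exact ⟨a, ha, _, ⟨c, rfl⟩, rfl⟩

lemma sum_factor {d : ℕ} (n : Fin d → ℕ) (hn : ∀ j, 1 ≤ n j)
    (A : Finset (Fin d → ℤ)) (hbox : ∀ a ∈ A, ∀ j, 0 ≤ a j ∧ a j < n j) (k : ℕ)
    (y : Fin d → ℝ) :
    ∑ b ∈ (A + (Finset.univ : Finset (Fin d → Fin k)).image
          (fun c : Fin d → Fin k => fun j => (c j : ℤ) * (n j : ℤ))),
        ee (∑ j, y j * (b j : ℝ))
    = (∑ a ∈ A, ee (∑ j, y j * (a j : ℝ))) * ∏ j, ∑ c : Fin k, ee ((n j * y j) * (c : ℕ)) := by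
  rw [box_eq, Finset.sum_image (box_inj n hn A hbox k), Finset.sum_product,
    Finset.prod_univ_sum, Finset.sum_mul]
  refine Finset.sum_congr rfl fun a _ => ?_
  rw [Fintype.piFinset_univ, Finset.mul_sum]
  refine Finset.sum_congr rfl fun c _ => ?_
  rw [← ee_sum, ← ee_add, ← Finset.sum_add_distrib]
  congr 1
  refine Finset.sum_congr rfl fun j _ => ?_
  simp only [Pi.add_apply]
  push_cast
  ring

lemma near_zero {d : ℕ} (n : Fin d → ℕ) (hn : ∀ j, 1 ≤ n j) [∀ j, NeZero (n j)]
    (A : Finset (Fin d → ℤ)) (hbox : ∀ a ∈ A, ∀ j, 0 ≤ a j ∧ a j < n j) (k : ℕ)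
    (y : Fin d → ℝ) (m : Fin d → ℤ) (hy : ∀ j, |n j * y j - m j| < 1 / k)
    (h0 : ∑ a ∈ A, ee (∑ j, y j * (a j : ℝ)) = 0) :
    ‖∑ a ∈ A, psi n (fun j => (m j : ZMod (n j))) (fun j => (a j : ZMod (n j)))‖
      ≤ A.card * (2 * π * (d / k)) := by
  have h1 : ∑ a ∈ A, psi n (fun j => (m j : ZMod (n j))) (fun j => (a j : ZMod (n j)))
      = ∑ a ∈ A, (ee (∑ j, (m j : ℝ) / n j * a j) - ee (∑ j, y j * (a j : ℝ))) := by
    rw [Finset.sum_sub_distrib, h0, sub_zero]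
    exact Finset.sum_congr rfl fun a _ => psi_int n m a
  rw [h1, ← nsmul_eq_mul]
  refine (norm_sum_le _ _).trans (Finset.sum_le_card_nsmul _ _ _ fun a ha => ?_)
  have h2 : ∑ j, y j * (a j : ℝ) = ∑ j, (m j : ℝ) / n j * a j
      + ∑ j, (y j - (m j : ℝ) / n j) * a j := by
    rw [← Finset.sum_add_distrib]
    exact Finset.sum_congr rfl fun j _ => by ring
  rw [h2, ee_add, ← mul_one_sub, norm_mul, ee_norm, one_mul, norm_sub_rev]
  refine (ee_sub_one _).trans ?_
  have hpi := Real.two_pi_pos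
  gcongr
  refine (Finset.abs_sum_le_sum_abs _ _).trans ?_
  have h3 : ∀ j ∈ (Finset.univ : Finset (Fin d)),
      |(y j - (m j : ℝ) / n j) * a j| ≤ 1 / k := by
    intro j _
    obtain ⟨b1, b2⟩ := hbox a ha j
    have hnj : (0 : ℝ) < n j := by exact_mod_cast hn j
    have e1 : (y j - (m j : ℝ) / n j) * a j = (n j * y j - m j) * (a j / n j) := by
      field_simp
    have b1' : (0 : ℝ) ≤ a j := by exact_mod_cast b1
    have b2' : (a j : ℝ) ≤ n j := by exact_mod_cast b2.le
    have e2 : |(a j : ℝ) / n j| ≤ 1 := by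
      rw [abs_of_nonneg (by positivity)]
      exact (div_le_one hnj).2 b2'
    rw [e1, abs_mul]
    calc _ ≤ |n j * y j - m j| * 1 := by gcongr
      _ ≤ 1 / k := by rw [mul_one]; exact (hy j).le
  refine (Finset.sum_le_card_nsmul _ _ _ h3).trans ?_
  simp [div_eq_mul_inv]

lemma exists_eps {ι : Type*} [Finite ι] (f : ι → ℝ) (hf : ∀ i, 0 ≤ f i) :
    ∃ ε > 0, ∀ i, f i < ε → f i = 0 := by
  classical
  have := Fintype.ofFinite ι
  obtain ⟨ε, h0, h⟩ : ∃ ε > 0, ∀ i ∈ (Finset.univ : Finset ι), f i < ε → f i = 0 := by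
    induction (Finset.univ : Finset ι) using Finset.induction_on with
    | empty => exact ⟨1, one_pos, by simp⟩
    | insert a s _ ih =>
      obtain ⟨ε, h0, h⟩ := ih
      by_cases ha : f a = 0
      · refine ⟨ε, h0, fun i hi hlt => ?_⟩
        rcases Finset.mem_insert.1 hi with rfl | hi
        · exact ha
        · exact h i hi hlt
      · refine ⟨min ε (f a), lt_min h0 (lt_of_le_of_ne (hf a) (Ne.symm ha)), fun i hi hlt => ?_⟩
        rcases Finset.mem_insert.1 hi with rfl | hi
        · exact absurd hlt (not_lt.2 (min_le_right _ _))
        · exact h i hi (hlt.trans_le (min_le_left _ _))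
  exact ⟨ε, h0, fun i => h i (Finset.mem_univ i)⟩

/-- Theorem `th:zd`: If `A ⊆ {0,…,n₁-1} × ⋯ × {0,…,n_d-1}` is not
spectral as a subset of the finite group `G = ℤ/n₁ × ⋯ × ℤ/n_d`, then for all
sufficiently large `k` the periodized set `A(k) = A + T(n,k) ⊆ ℤ^d` is not spectral
in `ℤ^d`, where `T(n,k) = {0, n₁, …, (k-1)n₁} × ⋯ × {0, n_d, …, (k-1)n_d}`. -/
theorem stmt17 (d : ℕ) (n : Fin d → ℕ) (hn : ∀ j, 1 ≤ n j)
    (A : Finset (Fin d → ℤ))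
    (hbox : ∀ a ∈ A, ∀ j, 0 ≤ a j ∧ a j < n j)
    (hnotspec : ¬ ∃ Λ : Finset (AddChar (∀ j, ZMod (n j)) ℂ),
        Λ.card = A.card ∧
        ∀ lam ∈ Λ, ∀ mu ∈ Λ, lam ≠ mu →
          ∑ a ∈ A, (lam * mu⁻¹) (fun j => (a j : ZMod (n j))) = 0) :
    ∃ k₀ : ℕ, ∀ k ≥ k₀,
      ¬ SpectralZd
        (A + (Finset.univ : Finset (Fin d → Fin k)).image
          (fun c : Fin d → Fin k => fun j => (c j : ℤ) * (n j : ℤ))) := by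
  classical
  have : ∀ j, NeZero (n j) := fun j => ⟨by have := hn j; omega⟩
  have hA : A.card ≠ 0 := by
    intro h
    exact hnotspec ⟨∅, by simp [h], by simp⟩
  obtain ⟨ε, hε, hεz⟩ := exists_eps
    (fun u : ∀ j, ZMod (n j) => ‖∑ a ∈ A, psi n u (fun j => (a j : ZMod (n j)))‖)
    (fun _ => norm_nonneg _)
  obtain ⟨K, hK⟩ := exists_nat_gt (A.card * (2 * π * d) / ε)
  refine ⟨K + 1, fun k hkK => ?_⟩
  have hk : 0 < k := by omega
  have hk' : (0 : ℝ) < k := by exact_mod_cast hk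
  have hsmall : A.card * (2 * π * (d / k)) < ε := by
    have h1 : A.card * (2 * π * d) / ε < k := hK.trans (by exact_mod_cast hkK)
    rw [div_lt_iff₀ hε] at h1
    have h2 : A.card * (2 * π * ((d : ℝ) / k)) = A.card * (2 * π * d) / k := by ring
    rw [h2, div_lt_iff₀ hk']
    linarith
  rintro ⟨S, hcard, hS⟩
  have hBcard : S.card = A.card * k ^ d := by
    rw [hcard, box_eq, Finset.card_image_of_injOn (box_inj n hn A hbox k), Finset.card_product]
    simp
  -- the cell index
  have hcell : ∀ t : ℝ, ⌊k * Int.fract t⌋₊ < k := by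
    intro t
    rw [Nat.floor_lt (mul_nonneg hk'.le (Int.fract_nonneg _))]
    have := Int.fract_lt_one t
    nlinarith
  let cell : (Fin d → ℝ) → (Fin d → Fin k) :=
    fun s j => ⟨⌊k * Int.fract (n j * s j)⌋₊, hcell _⟩
  obtain ⟨c, -, hc⟩ := Finset.exists_le_card_fiber_of_mul_le_card_of_maps_to
    (s := S) (t := (Finset.univ : Finset (Fin d → Fin k))) (f := cell) (n := A.card)
    (fun _ _ => Finset.mem_univ _) ⟨fun _ => ⟨0, hk⟩, Finset.mem_univ _⟩
    (by rw [hBcard]; simp [mul_comm])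
  obtain ⟨S', hS'sub, hS'card⟩ := Finset.exists_subset_card_eq hc
  let M : (Fin d → ℝ) → (∀ j, ZMod (n j)) := fun s j => ((⌊n j * s j⌋ : ℤ) : ZMod (n j))
  have hpair : ∀ s ∈ S', ∀ s' ∈ S', s ≠ s' →
      ∑ a ∈ A, psi n (M s - M s') (fun j => (a j : ZMod (n j))) = 0 := by
    intro s hs s' hs' hne
    obtain ⟨hs1, hs2⟩ := Finset.mem_filter.1 (hS'sub hs)
    obtain ⟨hs1', hs2'⟩ := Finset.mem_filter.1 (hS'sub hs')
    have hy : ∀ j, |n j * (s j - s' j) - ((⌊n j * s j⌋ - ⌊n j * s' j⌋ : ℤ) : ℝ)| < 1 / k := by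
      intro j
      have e0 : cell s j = cell s' j := by rw [hs2, hs2']
      have e1 : ⌊k * Int.fract (n j * s j)⌋₊ = ⌊k * Int.fract (n j * s' j)⌋₊ :=
        congrArg Fin.val e0
      have e2 : n j * (s j - s' j) - ((⌊n j * s j⌋ - ⌊n j * s' j⌋ : ℤ) : ℝ)
          = Int.fract (n j * s j) - Int.fract (n j * s' j) := by
        unfold Int.fract
        push_cast
        ring
      rw [e2, lt_div_iff₀ hk', ← abs_of_pos hk', ← abs_mul]
      have f1 := Nat.floor_le (mul_nonneg hk'.le (Int.fract_nonneg (n j * s j)))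
      have f2 := Nat.floor_le (mul_nonneg hk'.le (Int.fract_nonneg (n j * s' j)))
      have g1 := Nat.lt_floor_add_one (k * Int.fract (n j * s j))
      have g2 := Nat.lt_floor_add_one (k * Int.fract (n j * s' j))
      rw [e1] at f1 g1
      rw [abs_lt]
      constructor <;> nlinarith
    have h0 := hS s hs1 s' hs1' hne
    have h1 := sum_factor n hn A hbox k (fun j => s j - s' j)
    have h2 : ∏ j, ∑ c : Fin k, ee ((n j * (s j - s' j)) * (c : ℕ)) ≠ 0 := by
      refine Finset.prod_ne_zero_iff.2 fun j _ => ?_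
      have := geom_ne k hk (⌊n j * s j⌋ - ⌊n j * s' j⌋) _ (hy j)
      rwa [add_sub_cancel] at this
    have h3 : ∑ a ∈ A, ee (∑ j, (s j - s' j) * (a j : ℝ)) = 0 := by
      have h4 := h1.symm.trans h0
      exact (mul_eq_zero.1 h4).resolve_right h2
    have h5 := near_zero n hn A hbox k (fun j => s j - s' j) (fun j => ⌊n j * s j⌋ - ⌊n j * s' j⌋) hy h3
    have h6 : M s - M s' = fun j => ((⌊n j * s j⌋ - ⌊n j * s' j⌋ : ℤ) : ZMod (n j)) := by
      funext j
      simp [M]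
    rw [h6]
    exact norm_eq_zero.1 (hεz _ (h5.trans_lt hsmall))
  have hinj : Set.InjOn (fun s => psi n (M s)) (S' : Set (Fin d → ℝ)) := by
    intro s hs s' hs' h
    by_contra hne
    have h1 := hpair s hs s' hs' hne
    rw [← psi_sub] at h1
    simp only at h
    rw [h, mul_inv_cancel] at h1
    simp at h1
    exact hA (by simp [h1])
  refine hnotspec ⟨S'.image fun s => psi n (M s), ?_, ?_⟩
  · rw [Finset.card_image_of_injOn hinj, hS'card]
  · intro lam hl mu hm hne
    obtain ⟨s, hs, rfl⟩ := Finset.mem_image.1 hl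
    obtain ⟨s', hs', rfl⟩ := Finset.mem_image.1 hm
    rw [psi_sub]
    exact hpair s hs s' hs' (fun h => hne (by rw [h]))
end

section
/- Let A ⊆ ℤ^d be a finite set and Q = [0,1)^d. Then A is a spectral set in ℤ^d if and only if A + Q is a spectral set in ℝ^d. -/
open scoped BigOperators
open Complex Real MeasureTheory

/-- The Fourier transform of the indicator of a set `E ⊆ ℝ^d` at frequency `ξ`. -/
noncomputable def ftInd {d : ℕ} (E : Set (Fin d → ℝ)) (ξ : Fin d → ℝ) : ℂ :=
  ∫ x in E, Complex.exp (2 * π * Complex.I * (∑ j, ξ j * x j : ℝ))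

/-- A bounded measurable set `E ⊆ ℝ^d` of positive measure is spectral in `ℝ^d` if some
(countable) set `S` of exponentials is an orthogonal basis of `L²(E)`; equivalently
`∑_{s∈S} |χ̂_E(x - s)|² = |E|²` for almost every `x ∈ ℝ^d`. -/
def SpectralRd {d : ℕ} (E : Set (Fin d → ℝ)) : Prop :=
  ∃ S : Set (Fin d → ℝ), S.Countable ∧
    ∀ᵐ x : Fin d → ℝ,
      ∑' s : S, ‖ftInd E (x - (s : Fin d → ℝ))‖ ^ 2 = ((volume E).toReal) ^ 2

namespace SpecAux
open scoped ENNReal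

/-- the character -/
noncomputable def ee (t : ℝ) : ℂ := Complex.exp (2 * π * Complex.I * (t : ℝ))

lemma ee_add (s t : ℝ) : ee (s + t) = ee s * ee t := by
  simp only [ee, ← Complex.exp_add]; push_cast; ring_nf

lemma ee_zero : ee 0 = 1 := by simp [ee]

lemma ee_norm (t : ℝ) : ‖ee t‖ = 1 := by
  have : ee t = Complex.exp ((2 * π * t : ℝ) * Complex.I) := by
    simp only [ee]; push_cast; ring_nf
  rw [this, Complex.norm_exp_ofReal_mul_I]

lemma ee_int (n : ℤ) : ee n = 1 := by
  rw [ee, Complex.exp_eq_one_iff]; exact ⟨n, by push_cast; ring⟩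

lemma ee_conj (t : ℝ) : (starRingEnd ℂ) (ee t) = ee (-t) := by
  simp only [ee, ← Complex.exp_conj]; congr 1; simp [map_ofNat]

lemma ee_cont : Continuous ee := by unfold ee; fun_prop

lemma ee_sum {ι : Type*} (s : Finset ι) (f : ι → ℝ) : ee (∑ i ∈ s, f i) = ∏ i ∈ s, ee (f i) := by
  simp only [ee, ← Complex.exp_sum]; push_cast; rw [Finset.mul_sum]

/-- one-dimensional transform -/
noncomputable def q1 (y : ℝ) : ℂ := ∫ t in Set.Ico (0:ℝ) 1, ee (y * t)

lemma q1_eq (y : ℝ) : q1 y = ∫ t in (0:ℝ)..1, ee (y * t) := by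
  rw [q1, intervalIntegral.integral_of_le zero_le_one, integral_Ico_eq_integral_Ioc]

lemma q1_zero : q1 0 = 1 := by simp [q1, ee_zero]

lemma q1_ne (y : ℝ) (hy : y ≠ 0) : q1 y = (ee y - 1) / (2 * π * Complex.I * y) := by
  rw [q1_eq]
  have h : (2 * π * Complex.I * y : ℂ) ≠ 0 := by
    simp [hy, Real.pi_ne_zero]
  have := integral_exp_mul_complex (a := 0) (b := 1) h
  simp only [ee]
  simp only [Complex.ofReal_one, mul_one, Complex.ofReal_zero, mul_zero, Complex.exp_zero] at this
  rw [← this]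
  congr 1; ext t; push_cast; ring_nf

lemma q1_int (n : ℤ) (hn : n ≠ 0) : q1 n = 0 := by
  rw [q1_ne _ (by exact_mod_cast hn), ee_int]; simp

lemma q1_ne_zero (y : ℝ) (hy : |y| < 1) : q1 y ≠ 0 := by
  by_cases h : y = 0
  · subst h; simp [q1_zero]
  · rw [q1_ne y h]
    have h' : (2 * π * Complex.I * y : ℂ) ≠ 0 := by
      simp [h, Real.pi_ne_zero]
    refine div_ne_zero ?_ h'
    intro h1
    rw [sub_eq_zero, ee, Complex.exp_eq_one_iff] at h1
    obtain ⟨n, hn⟩ := h1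
    have hp : (2 * π * Complex.I : ℂ) ≠ 0 := by simp [Real.pi_ne_zero]
    rw [mul_comm (n : ℂ)] at hn
    have := mul_left_cancel₀ hp hn
    have h2 : y = n := by exact_mod_cast this
    rw [h2] at hy h
    have h3 : |n| < 1 := by exact_mod_cast hy
    rw [Int.abs_lt_one_iff] at h3
    simp [h3] at h

lemma q1_cont : Continuous q1 := by
  have : q1 = fun y => ∫ t in (0:ℝ)..1, ee (y * t) := by ext y; exact q1_eq y
  rw [this]
  apply intervalIntegral.continuous_parametric_intervalIntegral_of_continuous'
  have := ee_cont
  fun_prop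

lemma q1_sum (y : ℝ) : ∑' k : ℤ, ‖q1 (y - k)‖ₑ ^ 2 = 1 := by
  have hL : MemLp (fun t => ee (y * t)) 2 (volume.restrict (Set.Ioc (0:ℝ) 1)) := by
    apply MemLp.of_bound (C := 1)
    · have := ee_cont
      exact Continuous.aestronglyMeasurable (by fun_prop)
    · simp [ee_norm]
  have h := hasSum_sq_fourierCoeffOn zero_lt_one hL
  simp only [ee_norm] at h
  have e : ∀ k : ℤ, fourierCoeffOn zero_lt_one (fun t => ee (y * t)) k = q1 (y - k) := by
    intro k
    rw [fourierCoeffOn_eq_integral, q1_eq]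
    simp only [sub_zero, ne_eq, one_ne_zero, not_false_eq_true, div_self, one_smul]
    congr 1; ext t
    rw [fourier_coe_apply, smul_eq_mul, show (y - k) * t = -(k * t) + y * t by ring, ee_add]
    congr 1
    simp only [ee]; push_cast; ring_nf
  simp only [e] at h
  simp at h
  have h2 : ∀ k : ℤ, ‖q1 (y - k)‖ₑ ^ 2 = ENNReal.ofReal (‖q1 (y - k)‖ ^ 2) := by
    intro k
    rw [ENNReal.ofReal_pow (norm_nonneg _), ofReal_norm]
  simp only [h2]
  rw [← ENNReal.ofReal_tsum_of_nonneg (fun _ => by positivity) h.summable, h.tsum_eq]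
  simp

lemma tsum_pi (d : ℕ) (g : Fin d → ℤ → ℝ≥0∞) :
    ∑' k : Fin d → ℤ, ∏ j, g j (k j) = ∏ j, ∑' n, g j n := by
  induction d with
  | zero => simp
  | succ d ih =>
    rw [← (Fin.consEquiv (fun _ => ℤ)).tsum_eq, ENNReal.tsum_prod']
    simp only [Fin.prod_univ_succ, Fin.consEquiv_apply, Fin.cons_zero, Fin.cons_succ]
    simp only [ENNReal.tsum_mul_left, ENNReal.tsum_mul_right, ih (fun j => g j.succ)]

/-- the unit cube -/
def Q (d : ℕ) : Set (Fin d → ℝ) := Set.univ.pi fun _ => Set.Ico (0:ℝ) 1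

/-- integer vector as a real one -/
def cv {d : ℕ} (k : Fin d → ℤ) : Fin d → ℝ := fun j => (k j : ℝ)

lemma Q_meas (d : ℕ) : MeasurableSet (Q d) :=
  MeasurableSet.univ_pi fun _ => measurableSet_Ico

lemma Q_vol (d : ℕ) : volume (Q d) = 1 := by
  simp [Q, volume_pi_pi]

/-- transform of the cube -/
noncomputable def qd {d : ℕ} (ξ : Fin d → ℝ) : ℂ := ∏ j, q1 (ξ j)

lemma qd_eq {d : ℕ} (ξ : Fin d → ℝ) : ∫ x in Q d, ee (∑ j, ξ j * x j) = qd ξ := by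
  simp only [ee_sum]
  rw [Q, volume_pi, Measure.restrict_pi_pi]
  exact integral_fintype_prod_eq_prod (fun j t => ee (ξ j * t))

lemma qd_cont {d : ℕ} : Continuous (qd (d := d)) := by
  have := q1_cont
  unfold qd; fun_prop

lemma qd_sum {d : ℕ} (y : Fin d → ℝ) : ∑' k : Fin d → ℤ, ‖qd (y - cv k)‖ₑ ^ 2 = 1 := by
  have : ∀ k : Fin d → ℤ, ‖qd (y - cv k)‖ₑ ^ 2 = ∏ j, ‖q1 (y j - k j)‖ₑ ^ 2 := by
    intro k
    rw [qd, Finset.prod_pow]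
    congr 1
    simp only [enorm, nnnorm_prod, ENNReal.ofNNReal_finsetProd]
    rfl
  simp only [this]
  rw [tsum_pi d (fun j n => ‖q1 (y j - n)‖ₑ ^ 2)]
  simp [q1_sum]

lemma qd_int {d : ℕ} (k : Fin d → ℤ) (hk : k ≠ 0) : qd (cv k) = 0 := by
  obtain ⟨j, hj⟩ := Function.ne_iff.mp hk
  exact Finset.prod_eq_zero (Finset.mem_univ j) (q1_int _ hj)

lemma qd_zero {d : ℕ} : qd (0 : Fin d → ℝ) = 1 := by simp [qd, q1_zero]

lemma Q_sum {d : ℕ} (y : Fin d → ℝ) :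
    ∑' k : Fin d → ℤ, (Q d).indicator (fun _ => (1 : ℝ≥0∞)) (y + cv k) = 1 := by
  rw [tsum_eq_single (fun j => -⌊y j⌋)]
  · rw [Set.indicator_of_mem]
    intro j _
    simp only [Pi.add_apply, cv, Set.mem_Ico]; push_cast
    constructor <;> linarith [Int.floor_le (y j), Int.lt_floor_add_one (y j)]
  · intro k hk
    rw [Set.indicator_of_notMem]
    intro h
    apply hk
    ext j
    have := h j (Set.mem_univ j)
    simp only [Pi.add_apply, cv, Set.mem_Ico] at this
    have : ⌊y j⌋ = -k j := by
      rw [Int.floor_eq_iff]; push_cast; constructor <;> linarith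
    omega

lemma fold {d : ℕ} {ι : Type*} [Countable ι] (v : ι → Fin d → ℝ) (F : (Fin d → ℝ) → ℝ≥0∞)
    (hF : Measurable F) :
    ∫⁻ x in Q d, ∑' i, F (x - v i) =
      ∫⁻ y, F y * ∑' i, (Q d).indicator (fun _ => (1 : ℝ≥0∞)) (y + v i) := by
  have hm : Measurable ((Q d).indicator (fun _ => (1 : ℝ≥0∞))) :=
    measurable_const.indicator (Q_meas d)
  rw [lintegral_tsum (fun i => (by fun_prop))]
  simp only [← ENNReal.tsum_mul_left]
  rw [lintegral_tsum (fun i => (by fun_prop))]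
  congr 1; ext i
  rw [← lintegral_indicator (Q_meas d), ← lintegral_add_right_eq_self _ (v i)]
  congr 1; ext x
  by_cases h : x + v i ∈ Q d <;> simp [h]

/-- transform of the finite set -/
noncomputable def cA {d : ℕ} (A : Finset (Fin d → ℤ)) (ξ : Fin d → ℝ) : ℂ :=
  ∑ a ∈ A, ee (∑ j, ξ j * (a j : ℝ))

lemma cA_cont {d : ℕ} (A : Finset (Fin d → ℤ)) : Continuous (cA A) := by
  have := ee_cont
  unfold cA; fun_prop

lemma cA_zero {d : ℕ} (A : Finset (Fin d → ℤ)) : cA A 0 = A.card := by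
  simp [cA, ee_zero]

lemma cA_per {d : ℕ} (A : Finset (Fin d → ℤ)) (ξ : Fin d → ℝ) (k : Fin d → ℤ) :
    cA A (ξ - cv k) = cA A ξ := by
  unfold cA
  refine Finset.sum_congr rfl fun a _ => ?_
  have : ∑ j, (ξ - cv k) j * (a j : ℝ) = ∑ j, ξ j * (a j : ℝ) + ((-∑ j, k j * a j : ℤ) : ℝ) := by
    push_cast
    rw [← sub_eq_add_neg, ← Finset.sum_sub_distrib]
    exact Finset.sum_congr rfl fun j _ => by simp [cv]; ring
  rw [this, ee_add, ee_int, mul_one]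

/-- the union of cubes -/
def EA {d : ℕ} (A : Finset (Fin d → ℤ)) : Set (Fin d → ℝ) :=
  {x : Fin d → ℝ | ∃ a ∈ A, ∀ j, (a j : ℝ) ≤ x j ∧ x j < (a j : ℝ) + 1}

lemma EA_eq {d : ℕ} (A : Finset (Fin d → ℤ)) :
    EA A = ⋃ a ∈ A, {x | x - cv a ∈ Q d} := by
  ext x
  simp only [EA, Q, Set.mem_ofPred_eq, Set.mem_iUnion, Set.mem_univ_pi, Set.mem_Ico, cv,
    Pi.sub_apply, exists_prop, sub_nonneg, sub_lt_iff_lt_add']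

lemma sh_meas {d : ℕ} (a : Fin d → ℤ) : MeasurableSet {x : Fin d → ℝ | x - cv a ∈ Q d} :=
  (Q_meas d).preimage (measurable_id.sub_const _)

lemma sh_disj {d : ℕ} (A : Finset (Fin d → ℤ)) :
    (A : Set (Fin d → ℤ)).PairwiseDisjoint (fun a => {x : Fin d → ℝ | x - cv a ∈ Q d}) := by
  intro a _ b _ hab
  rw [Function.onFun, Set.disjoint_left]
  intro x hx hx'
  apply hab
  ext j
  have h1 := hx j (Set.mem_univ j)
  have h2 := hx' j (Set.mem_univ j)
  simp only [Pi.sub_apply, cv, Set.mem_Ico] at h1 h2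
  have e1 : ⌊x j⌋ = a j := by rw [Int.floor_eq_iff]; constructor <;> linarith
  have e2 : ⌊x j⌋ = b j := by rw [Int.floor_eq_iff]; constructor <;> linarith
  omega

lemma sh_vol {d : ℕ} (a : Fin d → ℤ) : volume {x : Fin d → ℝ | x - cv a ∈ Q d} = 1 := by
  rw [← Q_vol d]
  have := measure_preimage_add_right volume (-cv a) (Q d)
  simp only [← sub_eq_add_neg] at this
  exact this

lemma EA_vol {d : ℕ} (A : Finset (Fin d → ℤ)) : volume (EA A) = A.card := by
  rw [EA_eq, measure_biUnion_finset (sh_disj A) (fun a _ => sh_meas a)]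
  simp [sh_vol]

lemma ft_eq {d : ℕ} (A : Finset (Fin d → ℤ)) (ξ : Fin d → ℝ) :
    ftInd (EA A) ξ = cA A ξ * qd ξ := by
  have hc := ee_cont
  have : ftInd (EA A) ξ = ∫ x in EA A, ee (∑ j, ξ j * x j) := rfl
  rw [this, EA_eq, integral_biUnion_finset A (fun a _ => sh_meas a) (sh_disj A), cA,
    Finset.sum_mul]
  · refine Finset.sum_congr rfl fun a _ => ?_
    rw [← qd_eq, ← integral_indicator (sh_meas a), ← integral_indicator (Q_meas d),
      ← integral_add_right_eq_self _ (cv a), ← integral_const_mul]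
    congr 1; ext x
    by_cases h : x ∈ Q d
    · rw [Set.indicator_of_mem (by simpa using h), Set.indicator_of_mem h, ← ee_add]
      congr 1
      rw [← Finset.sum_add_distrib]
      exact Finset.sum_congr rfl fun j _ => by simp [cv]; ring
    · rw [Set.indicator_of_notMem (by simpa using h), Set.indicator_of_notMem h, mul_zero]
  · intro a _
    refine Measure.integrableOn_of_bounded (M := 1) (by simp [sh_vol]) ?_ ?_
    · exact Continuous.aestronglyMeasurable (by fun_prop)
    · simp [ee_norm]

lemma ft_cont {d : ℕ} (A : Finset (Fin d → ℤ)) : Continuous (ftInd (EA A)) := by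
  have : ftInd (EA A) = fun ξ => cA A ξ * qd ξ := by ext ξ; exact ft_eq A ξ
  rw [this]
  exact (cA_cont A).mul qd_cont

lemma cA_sq {d : ℕ} (A : Finset (Fin d → ℤ)) (y : Fin d → ℝ) :
    ((‖cA A y‖ ^ 2 : ℝ) : ℂ) = ∑ a ∈ A, ∑ b ∈ A, ee (∑ j, cv (a - b) j * y j) := by
  push_cast
  rw [← Complex.mul_conj', cA, map_sum, Finset.sum_mul_sum]
  refine Finset.sum_congr rfl fun a _ => Finset.sum_congr rfl fun b _ => ?_
  rw [ee_conj, ← ee_add]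
  congr 1
  rw [← sub_eq_add_neg, ← Finset.sum_sub_distrib]
  exact Finset.sum_congr rfl fun j _ => by simp [cv]; ring

instance (d : ℕ) : IsFiniteMeasure (volume.restrict (Q d)) :=
  ⟨by simp [Q_vol]⟩

lemma cA_int {d : ℕ} (A : Finset (Fin d → ℤ)) : ∫ y in Q d, ‖cA A y‖ ^ 2 = A.card := by
  have hc := ee_cont
  have hI : ∀ ξ : Fin d → ℝ, Integrable (fun y : Fin d → ℝ => ee (∑ j, ξ j * y j))
      (volume.restrict (Q d)) := by
    intro ξ
    refine Integrable.of_bound (C := 1) (Continuous.aestronglyMeasurable (by fun_prop)) ?_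
    simp [ee_norm]
  have : ((∫ y in Q d, ‖cA A y‖ ^ 2 : ℝ) : ℂ) = A.card := by
    rw [← integral_complex_ofReal]
    simp only [cA_sq]
    rw [integral_finsetSum _ (fun a _ => integrable_finsetSum _ fun b _ => hI _)]
    have : ∀ a ∈ A, ∫ y in Q d, ∑ b ∈ A, ee (∑ j, cv (a - b) j * y j) = 1 := by
      intro a ha
      rw [integral_finsetSum _ (fun b _ => hI _), Finset.sum_eq_single a]
      · rw [qd_eq, sub_self]; rw [show cv (0 : Fin d → ℤ) = 0 by ext j; simp [cv], qd_zero]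
      · intro b _ hb
        rw [qd_eq, qd_int]
        exact sub_ne_zero.mpr hb.symm
      · exact fun h => absurd ha h
    rw [Finset.sum_congr rfl this]; simp
  exact_mod_cast this

lemma ensq (z : ℂ) : ‖z‖ₑ ^ 2 = ENNReal.ofReal (‖z‖ ^ 2) := by
  rw [ENNReal.ofReal_pow (norm_nonneg _), ofReal_norm]

lemma cA_lint {d : ℕ} (A : Finset (Fin d → ℤ)) : ∫⁻ y in Q d, ‖cA A y‖ₑ ^ 2 = A.card := by
  simp only [ensq]
  rw [← ofReal_integral_eq_lintegral_ofReal, cA_int]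
  · simp
  · have := cA_cont A
    refine Integrable.of_bound (C := A.card ^ 2) (Continuous.aestronglyMeasurable (by fun_prop)) ?_
    refine Filter.Eventually.of_forall fun y => ?_
    rw [norm_pow, norm_norm]
    gcongr
    refine (norm_sum_le _ _).trans ?_
    simp [ee_norm]
  · exact Filter.Eventually.of_forall fun y => by positivity

lemma ft_periodize {d : ℕ} (A : Finset (Fin d → ℤ)) (x : Fin d → ℝ) :
    ∑' k : Fin d → ℤ, ‖ftInd (EA A) (x - cv k)‖ₑ ^ 2 = ‖cA A x‖ₑ ^ 2 := by
  simp only [ft_eq, cA_per, enorm_mul, mul_pow]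
  rw [ENNReal.tsum_mul_left, qd_sum, mul_one]

lemma ft_lint {d : ℕ} (A : Finset (Fin d → ℤ)) :
    ∫⁻ y, ‖ftInd (EA A) y‖ₑ ^ 2 = A.card := by
  have h := ft_cont A
  have := fold (cv (d := d)) (fun y => ‖ftInd (EA A) y‖ₑ ^ 2) (by fun_prop)
  simp only [ft_periodize, Q_sum, mul_one] at this
  rw [← this, cA_lint]

lemma dual {d : ℕ} (A : Finset (Fin d → ℤ)) (hA : A.Nonempty) (S : Finset (Fin d → ℝ))
    (hcard : S.card = A.card) (h : ∀ s ∈ S, ∀ s' ∈ S, s ≠ s' → cA A (s - s') = 0)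
    (x : Fin d → ℝ) : ∑ s ∈ S, ‖cA A (x - s)‖ ^ 2 = (A.card : ℝ) ^ 2 := by
  let u : (Fin d → ℝ) → EuclideanSpace ℂ A := fun s => WithLp.toLp 2 fun a => ee (∑ j, s j * (a.1 j : ℝ))
  have hu : ∀ s t, inner ℂ (u s) (u t) = cA A (t - s) := by
    intro s t
    simp only [u, PiLp.inner_apply, RCLike.inner_apply, ee_conj, ← ee_add]
    rw [cA, ← Finset.sum_coe_sort A]
    refine Finset.sum_congr rfl fun a _ => ?_
    congr 1
    rw [← sub_eq_add_neg, ← Finset.sum_sub_distrib]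
    exact Finset.sum_congr rfl fun j _ => by simp; ring
  have hn : (0:ℝ) < A.card := by exact_mod_cast hA.card_pos
  let r : ℂ := ((√(A.card : ℝ))⁻¹ : ℝ)
  have hr : ‖r‖ ^ 2 = (A.card : ℝ)⁻¹ := by
    simp only [r, Complex.norm_real, norm_inv, inv_pow, Real.norm_eq_abs, sq_abs]
    rw [Real.sq_sqrt hn.le]
  have hr' : (starRingEnd ℂ) r * r = (A.card : ℂ)⁻¹ := by
    rw [Complex.conj_mul', ← Complex.ofReal_pow, hr]; simp
  let v : S → EuclideanSpace ℂ A := fun s => r • u s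
  have hv : Orthonormal ℂ v := by
    rw [orthonormal_iff_ite]
    intro s t
    simp only [v, inner_smul_left, inner_smul_right, hu]
    rw [mul_left_comm, ← mul_assoc, hr']
    split_ifs with hst
    · subst hst
      rw [sub_self, cA_zero, inv_mul_cancel₀]
      exact_mod_cast hn.ne'
    · rw [h _ t.2 _ s.2, mul_zero]
      exact fun h => hst (Subtype.ext h.symm)
  have : Nonempty S := by
    rw [← Finset.card_pos.trans Finset.nonempty_coe_sort.symm, hcard]; exact hA.card_pos
  have hc : Fintype.card S = Module.finrank ℂ (EuclideanSpace ℂ A) := by simp [hcard]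
  let b := (basisOfOrthonormalOfCardEqFinrank hv hc).toOrthonormalBasis (by simpa using hv)
  have hb : ∀ s, b s = v s := by intro s; simp [b]
  have key := b.sum_sq_norm_inner_right (u x)
  simp only [hb, v, inner_smul_left, hu, norm_mul, mul_pow, RCLike.norm_conj, hr] at key
  rw [← Finset.mul_sum, Finset.sum_coe_sort S (fun s => ‖cA A (x - s)‖ ^ 2)] at key
  have hnorm : ‖u x‖ ^ 2 = A.card := by
    rw [EuclideanSpace.norm_sq_eq]
    simp [u, ee_norm]
  rw [hnorm, inv_mul_eq_iff_eq_mul₀ hn.ne'] at key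
  rw [key, sq]

lemma forward {d : ℕ} (A : Finset (Fin d → ℤ)) (hA : A.Nonempty) (S : Finset (Fin d → ℝ))
    (hcard : S.card = A.card) (h : ∀ s ∈ S, ∀ s' ∈ S, s ≠ s' → cA A (s - s') = 0) :
    SpectralRd (EA A) := by
  let φ : S × (Fin d → ℤ) → (Fin d → ℝ) := fun p => p.1 + cv p.2
  have hn : (A.card : ℂ) ≠ 0 := by exact_mod_cast hA.card_pos.ne'
  have hφ : Function.Injective φ := by
    rintro ⟨s, k⟩ ⟨t, l⟩ hst
    simp only [φ] at hst
    have h1 : s.1 = t.1 := by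
      by_contra hne
      have := h _ s.2 _ t.2 hne
      rw [show s.1 - t.1 = 0 - cv (k - l) by
        ext j
        have := congrFun hst j
        simp [cv] at this ⊢; linarith, cA_per, cA_zero] at this
      exact hn this
    rw [h1] at hst
    have h2 : k = l := by
      ext j
      have := congrFun (add_left_cancel hst) j
      simpa [cv] using this
    rw [h2, Subtype.ext h1]
  refine ⟨Set.range φ, Set.countable_range _, Filter.Eventually.of_forall fun x => ?_⟩
  have e : ∑' s : Set.range φ, ‖ftInd (EA A) (x - (s : Fin d → ℝ))‖ₑ ^ 2 = (A.card : ℝ≥0∞) ^ 2 := by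
    rw [← (Equiv.ofInjective φ hφ).tsum_eq, ENNReal.tsum_prod']
    simp only [Equiv.ofInjective_apply, φ, ← sub_sub, ft_periodize]
    rw [tsum_fintype, Finset.sum_coe_sort S (fun s => ‖cA A (x - s)‖ₑ ^ 2)]
    simp only [ensq]
    rw [← ENNReal.ofReal_sum_of_nonneg (fun _ _ => by positivity), dual A hA S hcard h,
      ENNReal.ofReal_pow (by positivity)]
    simp
  have e2 := congrArg ENNReal.toReal e
  rw [ENNReal.tsum_toReal_eq (fun s => by simp)] at e2
  rw [EA_vol]
  simpa using e2

lemma orth {d : ℕ} (A : Finset (Fin d → ℤ)) (hA : A.Nonempty) (S : Set (Fin d → ℝ))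
    (hae : ∀ᵐ x : Fin d → ℝ, Summable (fun s : S => ‖ftInd (EA A) (x - (s : Fin d → ℝ))‖ ^ 2) ∧
      ∑' s : S, ‖ftInd (EA A) (x - (s : Fin d → ℝ))‖ ^ 2 = (A.card : ℝ) ^ 2)
    (s : Fin d → ℝ) (hs : s ∈ S) (t : Fin d → ℝ) (ht : t ∈ S) (hst : s ≠ t) :
    ftInd (EA A) (s - t) = 0 := by
  have hcont := ft_cont A
  have hd := Measure.dense_of_ae (hae.mono fun x hx => (by
    have := hx.1.sum_le_tsum {⟨s, hs⟩, ⟨t, ht⟩} (fun _ _ => by positivity)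
    rw [hx.2, Finset.sum_pair (by simpa using hst)] at this
    exact this : ‖ftInd (EA A) (x - s)‖ ^ 2 + ‖ftInd (EA A) (x - t)‖ ^ 2 ≤ (A.card : ℝ) ^ 2))
  have hcl : IsClosed {x | ‖ftInd (EA A) (x - s)‖ ^ 2 + ‖ftInd (EA A) (x - t)‖ ^ 2 ≤
      (A.card : ℝ) ^ 2} := isClosed_le (by fun_prop) (by fun_prop)
  have hu := hcl.closure_eq ▸ hd.closure_eq
  have := Set.eq_univ_iff_forall.mp hu s
  simp only [Set.mem_ofPred_eq, sub_self] at this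
  have h0 : ftInd (EA A) 0 = A.card := by rw [ft_eq, cA_zero, qd_zero, mul_one]
  rw [h0] at this
  simp only [Complex.norm_natCast, add_le_iff_nonpos_right] at this
  simpa using le_antisymm this (by positivity)

lemma backward {d : ℕ} (A : Finset (Fin d → ℤ)) (hA : A.Nonempty) (h : SpectralRd (EA A)) :
    ∃ S : Finset (Fin d → ℝ), S.card = A.card ∧
      ∀ s ∈ S, ∀ s' ∈ S, s ≠ s' → cA A (s - s') = 0 := by
  obtain ⟨S, hS, hae⟩ := h
  have hn : 0 < A.card := hA.card_pos
  rw [EA_vol] at hae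
  have hae' : ∀ᵐ x : Fin d → ℝ,
      Summable (fun s : S => ‖ftInd (EA A) (x - (s : Fin d → ℝ))‖ ^ 2) ∧
      ∑' s : S, ‖ftInd (EA A) (x - (s : Fin d → ℝ))‖ ^ 2 = (A.card : ℝ) ^ 2 := by
    filter_upwards [hae] with x hx
    simp only [ENNReal.toReal_natCast] at hx
    refine ⟨?_, hx⟩
    by_contra hns
    rw [tsum_eq_zero_of_not_summable hns] at hx
    have : (0:ℝ) < (A.card : ℝ) ^ 2 := by positivity
    linarith
  have horth := orth A hA S hae'
  have : Countable S := hS.to_subtype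
  have hft := ft_cont A
  have hfold := fold (fun s : S => (s : Fin d → ℝ)) (fun y => ‖ftInd (EA A) y‖ₑ ^ 2) (by fun_prop)
  have hL : ∫⁻ x in Q d, ∑' s : S, ‖ftInd (EA A) (x - s)‖ₑ ^ 2 = (A.card : ℝ≥0∞) ^ 2 := by
    have : ∀ᵐ x ∂(volume.restrict (Q d)),
        ∑' s : S, ‖ftInd (EA A) (x - s)‖ₑ ^ 2 = (A.card : ℝ≥0∞) ^ 2 := by
      filter_upwards [ae_restrict_of_ae hae'] with x hx
      simp only [ensq]
      rw [← ENNReal.ofReal_tsum_of_nonneg (fun _ => by positivity) hx.1, hx.2,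
        ENNReal.ofReal_pow (by positivity)]
      simp
    rw [lintegral_congr_ae this]
    simp [Q_vol]
  rw [hL] at hfold
  -- find a translate with many points
  have hex : ∃ y : Fin d → ℝ, ∃ T : Finset S, A.card ≤ T.card ∧ ∀ s ∈ T, y + (s : Fin d → ℝ) ∈ Q d := by
    by_contra hno
    push Not at hno
    have hb : ∀ y : Fin d → ℝ, ∑' s : S, (Q d).indicator (fun _ => (1 : ℝ≥0∞)) (y + s) ≤
        ((A.card - 1 : ℕ) : ℝ≥0∞) := by
      intro y
      classical
      rw [ENNReal.tsum_eq_iSup_sum]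
      refine iSup_le fun T => ?_
      have : ∑ s ∈ T, (Q d).indicator (fun _ => (1 : ℝ≥0∞)) (y + s) =
          ((T.filter (fun s : S => y + (s : Fin d → ℝ) ∈ Q d)).card : ℝ≥0∞) := by
        simp [Set.indicator_apply]
      rw [this]
      have h2 : (T.filter (fun s : S => y + (s : Fin d → ℝ) ∈ Q d)).card < A.card := by
        by_contra h3
        obtain ⟨s, hs, hs'⟩ := hno y _ (not_lt.mp h3)
        exact hs' (Finset.mem_filter.mp hs).2
      exact_mod_cast Nat.le_sub_one_of_lt h2
    have : (A.card : ℝ≥0∞) ^ 2 ≤ A.card * ((A.card - 1 : ℕ) : ℝ≥0∞) := by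
      rw [hfold]
      refine (lintegral_mono fun y => mul_le_mul_right (hb y) _).trans ?_
      rw [lintegral_mul_const _ (by fun_prop), ft_lint]
    have h2 : A.card ^ 2 ≤ A.card * (A.card - 1) := by exact_mod_cast this
    rw [sq] at h2
    have := Nat.le_of_mul_le_mul_left h2 hn
    omega
  obtain ⟨y, T, hT, hTQ⟩ := hex
  obtain ⟨U, hUT, hU⟩ := Finset.exists_subset_card_eq hT
  refine ⟨U.map (Function.Embedding.subtype _), by simp [hU], ?_⟩
  intro s hs t ht hst
  simp only [Finset.mem_map, Function.Embedding.subtype_apply] at hs ht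
  obtain ⟨s, hs, rfl⟩ := hs
  obtain ⟨t, ht, rfl⟩ := ht
  have h0 := horth _ s.2 _ t.2 hst
  rw [ft_eq, mul_eq_zero] at h0
  refine h0.resolve_right ?_
  refine Finset.prod_ne_zero_iff.mpr ?_
  intro j _
  apply q1_ne_zero
  have h1 := hTQ s (hUT hs) j (Set.mem_univ j)
  have h2 := hTQ t (hUT ht) j (Set.mem_univ j)
  simp only [Pi.add_apply, Set.mem_Ico] at h1 h2
  rw [abs_lt, Pi.sub_apply]
  constructor <;> linarith

lemma spectralZd_iff {d : ℕ} (A : Finset (Fin d → ℤ)) : SpectralZd A ↔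
    ∃ S : Finset (Fin d → ℝ), S.card = A.card ∧
      ∀ s ∈ S, ∀ s' ∈ S, s ≠ s' → cA A (s - s') = 0 := Iff.rfl

lemma main {d : ℕ} (A : Finset (Fin d → ℤ)) : SpectralZd A ↔ SpectralRd (EA A) := by
  rw [spectralZd_iff]
  rcases A.eq_empty_or_nonempty with rfl | hA
  · refine iff_of_true ⟨∅, by simp⟩ ⟨∅, Set.countable_empty, ?_⟩
    simp [EA]
  · exact ⟨fun ⟨S, h1, h2⟩ => forward A hA S h1 h2, backward A hA⟩

end SpecAux

/-- Theorem `th:discrete-continuous`: A finite set `A ⊆ ℤ^d` is spectral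
in `ℤ^d` if and only if `A + [0,1)^d` is spectral in `ℝ^d`. -/
theorem stmt18 (d : ℕ) (A : Finset (Fin d → ℤ)) :
    SpectralZd A ↔
    SpectralRd {x : Fin d → ℝ | ∃ a ∈ A, ∀ j, (a j : ℝ) ≤ x j ∧ x j < (a j : ℝ) + 1} :=
  SpecAux.main A
end
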